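/- Let R be a finite product of fields, i.e. R = ∏_{i ∈ I} K_i for a finite index set I and fields K_i, and let c, d ∈ R. Then the ideals ann(c) and ann(d) are principal, say ann(c) = (P) and ann(d) = (Q), and the map R/(c, d) ⊕ R/(c, d) → H sending ([f], [g]) to [f·P, g·Q] is a well-defined R-module isomorphism. -/

import Mathlib

open Submodule

section Core
variable (R : Type*) [CommRing R]

/-- The annihilator ideal of an element `c`: `{r : R | c * r = 0}`. -/
def annI (c : R) : Ideal R := LinearMap.ker (LinearMap.lsmul R R c)

lemma mem_annI {R : Type*} [CommRing R] {c r : R} : r ∈ annI R c ↔ c * r = 0 := Iff.rfl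

/-- `Z = {(f, g) | c * f = d * g}`. -/
def Zsub (c d : R) : Submodule R (R × R) where
  carrier := {p | c * p.1 = d * p.2}
  add_mem' := by
    rintro ⟨a1, a2⟩ ⟨b1, b2⟩ ha hb
    simp only [Set.mem_setOf_eq] at *
    simp [mul_add, ha, hb]
  zero_mem' := by simp
  smul_mem' := by
    rintro r ⟨p1, p2⟩ hp
    simp only [Set.mem_setOf_eq, Prod.smul_fst, Prod.smul_snd, smul_eq_mul] at *
    rw [mul_left_comm, hp, mul_left_comm]

lemma mem_Zsub {R : Type*} [CommRing R] {c d f g : R} :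
    (f, g) ∈ Zsub R c d ↔ c * f = d * g := Iff.rfl

/-- `B = {(d * r, c * r) | r ∈ R}`. -/
def Bsub (c d : R) : Submodule R (R × R) :=
  LinearMap.range ((LinearMap.lsmul R R d).prod (LinearMap.lsmul R R c))

/-- The homology `H = Z / B`. -/
abbrev Hmod (c d : R) := Zsub R c d ⧸ (Bsub R c d).comap (Zsub R c d).subtype

/-- The class `[f, g] ∈ H` of a pair `(f, g)` with `c * f = d * g`. -/
def Hmk (c d : R) (f g : R) (h : c * f = d * g) : Hmod R c d :=
  Submodule.Quotient.mk ⟨(f, g), h⟩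

/-- The submodule of `H` generated by horizontally pure classes `[f, 0]`. -/
def Hpureh (c d : R) : Submodule R (Hmod R c d) :=
  span R {h | ∃ f, ∃ hf : c * f = d * 0, h = Hmk R c d f 0 hf}

/-- The submodule of `H` generated by vertically pure classes `[0, g]`. -/
def Hpurev (c d : R) : Submodule R (Hmod R c d) :=
  span R {h | ∃ g, ∃ hg : c * 0 = d * g, h = Hmk R c d 0 g hg}

/-- The ideal `M = {r ∈ ann(cd) | ∃ f ∈ ann(c), g ∈ ann(d), rd = fd ∧ rc = gc}`. -/
def Msub (c d : R) : Ideal R where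
  carrier := {r | r ∈ annI R (c * d) ∧
    ∃ f ∈ annI R c, ∃ g ∈ annI R d, r * d = f * d ∧ r * c = g * c}
  zero_mem' := ⟨zero_mem _, 0, zero_mem _, 0, zero_mem _, by simp, by simp⟩
  add_mem' := by
    rintro a b ⟨ha, f, hf, g, hg, hfd, hgc⟩ ⟨hb, f', hf', g', hg', hfd', hgc'⟩
    exact ⟨add_mem ha hb, f + f', add_mem hf hf', g + g', add_mem hg hg',
      by rw [add_mul, add_mul, hfd, hfd'], by rw [add_mul, add_mul, hgc, hgc']⟩
  smul_mem' := by
    rintro s a ⟨ha, f, hf, g, hg, hfd, hgc⟩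
    refine ⟨Submodule.smul_mem _ s ha, s * f, ?_, s * g, ?_, ?_, ?_⟩
    · simpa [smul_eq_mul] using Submodule.smul_mem _ s hf
    · simpa [smul_eq_mul] using Submodule.smul_mem _ s hg
    · show (s * a) * d = (s * f) * d
      rw [mul_assoc, hfd, mul_assoc]
    · show (s * a) * c = (s * g) * c
      rw [mul_assoc, hgc, mul_assoc]

lemma mem_Msub {R : Type*} [CommRing R] {c d r : R} :
    r ∈ Msub R c d ↔ r ∈ annI R (c * d) ∧
      ∃ f ∈ annI R c, ∃ g ∈ annI R d, r * d = f * d ∧ r * c = g * c := Iff.rfl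

end Core

section Helpers
variable {R : Type*} [CommRing R]

lemma dr_mem_annI {c d r : R} (hr : r ∈ annI R (c * d)) : d * r ∈ annI R c := by
  rw [mem_annI] at *
  rw [← mul_assoc]; exact hr

lemma cr_mem_annI {c d r : R} (hr : r ∈ annI R (c * d)) : c * r ∈ annI R d := by
  rw [mem_annI] at *
  calc d * (c * r) = c * d * r := by ring
  _ = 0 := hr

lemma ann_pair_Z {c d f g : R} (hf : f ∈ annI R c) (hg : g ∈ annI R d) :
    c * f = d * g := by
  rw [mem_annI] at hf hg; rw [hf, hg]

lemma cf_mem_inf {c d f g : R} (h : c * f = d * g) :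
    c * f ∈ Ideal.span {c} ⊓ Ideal.span {d} := by
  refine Submodule.mem_inf.mpr ⟨?_, ?_⟩
  · exact Ideal.mem_span_singleton.mpr ⟨f, rfl⟩
  · exact Ideal.mem_span_singleton.mpr ⟨g, h⟩

lemma rc_mem_inf_ann {c d r : R} (hr : r ∈ annI R (c * d)) :
    r * c ∈ Ideal.span {c} ⊓ annI R d := by
  rw [mem_annI] at hr
  refine Submodule.mem_inf.mpr ⟨Ideal.mem_span_singleton.mpr ⟨r, mul_comm r c⟩, ?_⟩
  rw [mem_annI]
  calc d * (r * c) = c * d * r := by ring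
  _ = 0 := hr

lemma rd_mem_ann_inf {c d r : R} (hr : r ∈ annI R (c * d)) :
    r * d ∈ annI R c ⊓ Ideal.span {d} := by
  rw [mem_annI] at hr
  refine Submodule.mem_inf.mpr ⟨?_, Ideal.mem_span_singleton.mpr ⟨r, mul_comm r d⟩⟩
  rw [mem_annI]
  calc c * (r * d) = c * d * r := by ring
  _ = 0 := hr

lemma HmkPQ {c d P Q : R} (hP : annI R c = Ideal.span {P}) (hQ : annI R d = Ideal.span {Q})
    (f g : R) : c * (f * P) = d * (g * Q) := by
  have hp : c * P = 0 := by
    rw [← mem_annI (R := R)]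
    rw [hP]
    exact Ideal.mem_span_singleton_self P
  have hq : d * Q = 0 := by
    rw [← mem_annI (R := R)]
    rw [hQ]
    exact Ideal.mem_span_singleton_self Q
  calc c * (f * P) = f * (c * P) := by ring
  _ = 0 := by rw [hp, mul_zero]
  _ = g * (d * Q) := by rw [hq, mul_zero]
  _ = d * (g * Q) := by ring

end Helpers

section QuotTypes
variable (R : Type*) [CommRing R]

/-- `ann(cd)/M`. -/
abbrev Tcd (c d : R) :=
  ↥(annI R (c * d)) ⧸ Submodule.comap (annI R (c * d)).subtype (Msub R c d)

/-- `ann(c)/(ann(c)·(d))`. -/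
abbrev Th (c d : R) :=
  ↥(annI R c) ⧸ Submodule.comap (annI R c).subtype (annI R c * Ideal.span {d})

/-- `ann(d)/((c)·ann(d))`. -/
abbrev Tv (c d : R) :=
  ↥(annI R d) ⧸ Submodule.comap (annI R d).subtype (Ideal.span {c} * annI R d)

/-- `((c) ∩ (d))/(cd)`. -/
abbrev T4 (c d : R) :=
  ↥(Ideal.span {c} ⊓ Ideal.span {d}) ⧸
    Submodule.comap (Ideal.span {c} ⊓ Ideal.span {d}).subtype (Ideal.span {c * d})

/-- `((c) ∩ ann(d))/((c)·ann(d))`. -/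
abbrev Tc' (c d : R) :=
  ↥(Ideal.span {c} ⊓ annI R d) ⧸
    Submodule.comap (Ideal.span {c} ⊓ annI R d).subtype (Ideal.span {c} * annI R d)

/-- `(ann(c) ∩ (d))/(ann(c)·(d))`. -/
abbrev Td' (c d : R) :=
  ↥(annI R c ⊓ Ideal.span {d}) ⧸
    Submodule.comap (annI R c ⊓ Ideal.span {d}).subtype (annI R c * Ideal.span {d})

/-- `φ : Z → R`, `(f, g) ↦ c·f`. -/
def phiZ (c d : R) : Zsub R c d →ₗ[R] R :=
  LinearMap.lsmul R R c ∘ₗ (LinearMap.fst R R R ∘ₗ (Zsub R c d).subtype)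

end QuotTypes

variable {R : Type*} [CommRing R]

/-!
If `c * c' * c = c`, then `1 - c * c'` annihilates `c`, so `R = (c) + ann(c)`. When `(f, g) ∈ Z`,
subtracting the boundary of `r = c' * g` moves `f` into `ann(c) = (P)` and `g` into `ann(d) = (Q)`,
so the map is onto. If `f * P` is a multiple of `d`, write `1 = c * c' + v * P` to get
`f = c * c' * f + v * (f * P) ∈ (c, d)`; the same argument for `g` gives injectivity. In a product
of fields the pointwise inverse serves as `c'`.
-/

section QuasiInverse

variable {c c' d f g P : R}

lemma one_sub_mul_mem_annI (hc : c * c' * c = c) : 1 - c * c' ∈ annI R c :=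
  mem_annI.mpr (by linear_combination -hc)

lemma annI_eq_span_one_sub_mul (hc : c * c' * c = c) : annI R c = Ideal.span {1 - c * c'} := by
  refine le_antisymm (fun r hr ↦ Ideal.mem_span_singleton.mpr ⟨r, ?_⟩)
    ((Ideal.span_singleton_le_iff_mem _).mpr (one_sub_mul_mem_annI hc))
  linear_combination c' * mem_annI.mp hr

lemma mem_span_pair_of_mul_mem_span (hc : c * c' * c = c) (hP : annI R c ≤ Ideal.span {P})
    (h : f * P ∈ Ideal.span {d}) : f ∈ Ideal.span {c, d} := by
  obtain ⟨v, hv⟩ := Ideal.mem_span_singleton'.mp (hP (one_sub_mul_mem_annI hc))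
  obtain ⟨r, hr⟩ := Ideal.mem_span_singleton'.mp h
  exact Ideal.mem_span_pair.mpr ⟨c' * f, v * r, by linear_combination v * hr + f * hv⟩

lemma exists_sub_mem_annI (hc : c * c' * c = c) (h : c * f = d * g) :
    ∃ r, f - d * r ∈ annI R c ∧ g - c * r ∈ annI R d := by
  refine ⟨c' * g, mem_annI.mpr ?_, mem_annI.mpr ?_⟩
  · linear_combination c * c' * h - f * hc
  · linear_combination (c * c' - 1) * h - f * hc

end QuasiInverse

section Homology

variable {c d f g f' g' : R}

lemma Hmk_eq_Hmk_iff {h : c * f = d * g} {h' : c * f' = d * g'} :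
    Hmk R c d f g h = Hmk R c d f' g' h' ↔ ∃ r, d * r = f - f' ∧ c * r = g - g' := by
  rw [Hmk, Hmk, Submodule.Quotient.eq]
  exact exists_congr fun r ↦ Prod.ext_iff

lemma Hmk_eq_zero_iff {h : c * f = d * g} :
    Hmk R c d f g h = 0 ↔ ∃ r, d * r = f ∧ c * r = g := by
  have hzero : Hmk R c d 0 0 (by rw [mul_zero, mul_zero]) = 0 := rfl
  rw [← hzero, Hmk_eq_Hmk_iff, sub_zero, sub_zero]

lemma exists_eq_Hmk (z : Hmod R c d) : ∃ f g, ∃ h : c * f = d * g, z = Hmk R c d f g h := by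
  obtain ⟨⟨⟨f, g⟩, h⟩, rfl⟩ := Submodule.Quotient.mk_surjective _ z
  exact ⟨f, g, h, rfl⟩

variable (c d) in
lemma span_pair_le_annihilator_Hmod : Ideal.span {c, d} ≤ Module.annihilator R (Hmod R c d) := by
  refine Ideal.span_le.mpr fun x hx ↦ Module.mem_annihilator.mpr fun z ↦ ?_
  obtain ⟨f, g, h, rfl⟩ := exists_eq_Hmk z
  have hxZ : c * (x * f) = d * (x * g) := by linear_combination x * h
  change Hmk R c d (x * f) (x * g) hxZ = 0
  rw [Hmk_eq_zero_iff]
  obtain rfl | rfl := hx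
  · exact ⟨g, h.symm, rfl⟩
  · exact ⟨f, rfl, h⟩

end Homology

section AnnihilatorMap

/-- The linear map `R ⧸ I → M`, `[r] ↦ r • m`, for a module `M` annihilated by `I`. -/
def quotToSpanSingleton {M : Type*} [AddCommGroup M] [Module R M] {I : Ideal R}
    (hI : I ≤ Module.annihilator R M) (m : M) : R ⧸ I →ₗ[R] M :=
  I.liftQ (LinearMap.toSpanSingleton R M m) fun _ hr ↦ Module.mem_annihilator.mp (hI hr) m

variable {c d c' d' P Q : R}

/-- The linear map `R/(c, d) ⊕ R/(c, d) → H`, `([f], [g]) ↦ [f * P, g * Q]`, for `P ∈ ann(c)` and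
`Q ∈ ann(d)`, built as `([f], [g]) ↦ f • [P, 0] + g • [0, Q]`. -/
def annMap (hP : P ∈ annI R c) (hQ : Q ∈ annI R d) :
    (R ⧸ Ideal.span {c, d}) × (R ⧸ Ideal.span {c, d}) →ₗ[R] Hmod R c d :=
  (quotToSpanSingleton (span_pair_le_annihilator_Hmod c d)
      (Hmk R c d P 0 (ann_pair_Z hP (zero_mem _)))).coprod
    (quotToSpanSingleton (span_pair_le_annihilator_Hmod c d)
      (Hmk R c d 0 Q (ann_pair_Z (zero_mem _) hQ)))

lemma annMap_mk (hP : P ∈ annI R c) (hQ : Q ∈ annI R d) (f g : R) :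
    annMap hP hQ (Ideal.Quotient.mk _ f, Ideal.Quotient.mk _ g) =
      Hmk R c d (f * P) (g * Q)
        (ann_pair_Z (Ideal.mul_mem_left _ f hP) (Ideal.mul_mem_left _ g hQ)) := by
  have hZ : c * (f * P + g * 0) = d * (f * 0 + g * Q) := by
    linear_combination f * mem_annI.mp hP - g * mem_annI.mp hQ
  change Hmk R c d (f * P + g * 0) (f * 0 + g * Q) hZ = _
  simp only [mul_zero, add_zero, zero_add]

lemma annMap_injective (hc : c * c' * c = c) (hd : d * d' * d = d)
    (hPc : P ∈ annI R c) (hQd : Q ∈ annI R d)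
    (hP : annI R c ≤ Ideal.span {P}) (hQ : annI R d ≤ Ideal.span {Q}) :
    Function.Injective (annMap hPc hQd) := by
  rw [injective_iff_map_eq_zero]
  rintro ⟨x, y⟩ hxy
  obtain ⟨f, rfl⟩ := Ideal.Quotient.mk_surjective x
  obtain ⟨g, rfl⟩ := Ideal.Quotient.mk_surjective y
  rw [annMap_mk, Hmk_eq_zero_iff] at hxy
  obtain ⟨r, hfP, hgQ⟩ := hxy
  have hf : f ∈ Ideal.span {c, d} :=
    mem_span_pair_of_mul_mem_span hc hP (Ideal.mem_span_singleton.mpr ⟨r, hfP.symm⟩)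
  have hg : g ∈ Ideal.span {c, d} := by
    rw [Ideal.span_pair_comm]
    exact mem_span_pair_of_mul_mem_span hd hQ (Ideal.mem_span_singleton.mpr ⟨r, hgQ.symm⟩)
  exact Prod.ext (Ideal.Quotient.eq_zero_iff_mem.mpr hf) (Ideal.Quotient.eq_zero_iff_mem.mpr hg)

lemma annMap_surjective (hc : c * c' * c = c)
    (hPc : P ∈ annI R c) (hQd : Q ∈ annI R d)
    (hP : annI R c ≤ Ideal.span {P}) (hQ : annI R d ≤ Ideal.span {Q}) :
    Function.Surjective (annMap hPc hQd) := by
  intro z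
  obtain ⟨f, g, h, rfl⟩ := exists_eq_Hmk z
  obtain ⟨r, hf, hg⟩ := exists_sub_mem_annI hc h
  obtain ⟨s, hs⟩ := Ideal.mem_span_singleton'.mp (hP hf)
  obtain ⟨t, ht⟩ := Ideal.mem_span_singleton'.mp (hQ hg)
  refine ⟨(Ideal.Quotient.mk _ s, Ideal.Quotient.mk _ t), ?_⟩
  rw [annMap_mk, Hmk_eq_Hmk_iff]
  exact ⟨-r, by linear_combination -hs, by linear_combination -ht⟩

end AnnihilatorMap

theorem stmt10_general {c d c' d' : R} (hc : c * c' * c = c) (hd : d * d' * d = d) :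
    (∃ P, annI R c = Ideal.span {P}) ∧ (∃ Q, annI R d = Ideal.span {Q}) ∧
      ∀ {P Q : R} (hP : annI R c = Ideal.span {P}) (hQ : annI R d = Ideal.span {Q}),
        ∃ φ : (R ⧸ Ideal.span {c, d}) × (R ⧸ Ideal.span {c, d}) →ₗ[R] Hmod R c d,
          (∀ f g : R,
            φ (Ideal.Quotient.mk (Ideal.span {c, d}) f, Ideal.Quotient.mk (Ideal.span {c, d}) g) =
              Hmk R c d (f * P) (g * Q) (HmkPQ hP hQ f g)) ∧
          Function.Bijective φ := by
  refine ⟨⟨_, annI_eq_span_one_sub_mul hc⟩, ⟨_, annI_eq_span_one_sub_mul hd⟩,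
    fun {P Q} hP hQ ↦ ?_⟩
  have hPc : P ∈ annI R c := hP.ge <| Ideal.mem_span_singleton_self P
  have hQd : Q ∈ annI R d := hQ.ge <| Ideal.mem_span_singleton_self Q
  exact ⟨annMap hPc hQd, annMap_mk hPc hQd,
    annMap_injective hc hd hPc hQd hP.le hQ.le, annMap_surjective hc hPc hQd hP.le hQ.le⟩

theorem stmt10 {ι : Type*} [Fintype ι] (K : ι → Type*) [∀ i, Field (K i)]
    (c d : ∀ i, K i) :
    ∃ P Q : ∀ i, K i,
      ∃ (hP : annI (∀ i, K i) c = Ideal.span {P})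
        (hQ : annI (∀ i, K i) d = Ideal.span {Q}),
      ∃ φ : ((∀ i, K i) ⧸ Ideal.span {c, d}) × ((∀ i, K i) ⧸ Ideal.span {c, d})
          →ₗ[∀ i, K i] Hmod (∀ i, K i) c d,
        (∀ f g : ∀ i, K i,
          φ (Ideal.Quotient.mk (Ideal.span {c, d}) f,
             Ideal.Quotient.mk (Ideal.span {c, d}) g) =
            Hmk (∀ i, K i) c d (f * P) (g * Q) (HmkPQ hP hQ f g)) ∧
        Function.Bijective φ := by
  have hinv (a : ∀ i, K i) : a * a⁻¹ * a = a := funext fun i ↦ mul_inv_mul_cancel (a i)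
  obtain ⟨⟨P, hP⟩, ⟨Q, hQ⟩, hφ⟩ := stmt10_general (hinv c) (hinv d)
  exact ⟨P, Q, hP, hQ, hφ hP hQ⟩
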